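/- arXiv:2505.12866 — 4 statements merged into one kernel-verified Lean document; each statement's English description precedes it below -/
import Mathlib

section
/- Let 𝒢 be a hereditary graph class that does not contain all clique partition graphs (i.e., some disjoint union of complete graphs does not belong to 𝒢). Then 𝒢 is (tw,ω)-bounded if and only if 𝒢 has bounded tree-independence number. -/
open SimpleGraph

/-- The independence number of the subgraph of `G` induced by `s`:
the supremum of sizes of independent sets contained in `s`. -/
noncomputable def setIndepNum {V : Type*} (G : SimpleGraph V) (s : Set V) : ℕ :=
  sSup {n | ∃ t : Finset V, ↑t ⊆ s ∧ (∀ u ∈ t, ∀ v ∈ t, u ≠ v → ¬ G.Adj u v) ∧ t.card = n}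

/-- A tree decomposition of a graph `G`. -/
structure TreeDecomp {V : Type*} (G : SimpleGraph V) where
  ι : Type
  T : SimpleGraph ι
  tree : T.IsTree
  bag : ι → Set V
  bag_vert : ∀ v : V, ∃ i, v ∈ bag i
  bag_edge : ∀ u v : V, G.Adj u v → ∃ i, u ∈ bag i ∧ v ∈ bag i
  bag_conn : ∀ v : V, (T.induce {i | v ∈ bag i}).Connected

/-- The tree-independence number of `G`: the least `n` such that `G` has a tree
decomposition all of whose bags induce subgraphs with independence number at most `n`. -/
noncomputable def treeIndepNum {V : Type*} (G : SimpleGraph V) : ℕ :=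
  sInf {n | ∃ D : TreeDecomp G, ∀ i, setIndepNum G (D.bag i) ≤ n}

/-- The treewidth of `G`: the least `n` such that `G` has a tree decomposition
all of whose bags have at most `n + 1` vertices. -/
noncomputable def treewidth {V : Type*} (G : SimpleGraph V) : ℕ :=
  sInf {n | ∃ D : TreeDecomp G, ∀ i, (D.bag i).ncard ≤ n + 1}

/-- A finite graph, bundled. -/
structure FinGraph : Type 1 where
  V : Type
  finite : Finite V
  G : SimpleGraph V

/-- A class of (finite) graphs is `(tw, ω)`-bounded if there is a function `f` such that every
induced subgraph `G'` of a graph in the class satisfies `tw(G') ≤ f(ω(G'))`. -/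
def TwOmegaBounded (C : Set FinGraph) : Prop :=
  ∃ f : ℕ → ℕ, ∀ A ∈ C, ∀ s : Set A.V,
    treewidth (A.G.induce s) ≤ f ((A.G.induce s).cliqueNum)

/-- A class of graphs has bounded tree-independence number. -/
def BddTreeIndep (C : Set FinGraph) : Prop :=
  ∃ c : ℕ, ∀ A ∈ C, treeIndepNum A.G ≤ c

/-- A graph class is hereditary if it contains every graph isomorphic to an induced
subgraph of one of its members. -/
def Hereditary (C : Set FinGraph) : Prop :=
  ∀ A ∈ C, ∀ B : FinGraph, Nonempty (B.G ↪g A.G) → B ∈ C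

/-- `G` is a clique partition graph (disjoint union of complete graphs): there is a
partition of the vertices (given by the fibers of some map) such that two distinct
vertices are adjacent iff they lie in the same part. -/
def IsCliquePartitionGraph {V : Type*} (G : SimpleGraph V) : Prop :=
  ∃ (ι : Type) (f : V → ι), ∀ u v : V, u ≠ v → (G.Adj u v ↔ f u = f v)

theorem SimpleGraph.exists_ramsey (a b : ℕ) :
    ∃ N : ℕ, ∀ (V : Type) (G : SimpleGraph V) (S : Finset V), N ≤ S.card →
      (∃ t ⊆ S, G.IsNClique a t) ∨ ∃ t ⊆ S, G.IsNIndepSet b t := by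
  induction a generalizing b with
  | zero => exact ⟨0, fun V G S _ => Or.inl ⟨∅, by simp, by simp⟩⟩
  | succ a iha =>
    induction b with
    | zero => exact ⟨0, fun V G S _ => Or.inr ⟨∅, by simp, by simp [isNIndepSet_iff]⟩⟩
    | succ b ihb =>
      obtain ⟨N₁, h₁⟩ := iha (b + 1)
      obtain ⟨N₂, h₂⟩ := ihb
      refine ⟨N₁ + N₂ + 1, fun V G S hS => ?_⟩
      classical
      obtain ⟨v, hv⟩ : S.Nonempty := Finset.card_pos.1 (by omega)
      have hcard := Finset.card_filter_add_card_filter_not (s := S.erase v) (fun w => G.Adj v w)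
      rw [Finset.card_erase_of_mem hv] at hcard
      have hsub : ∀ p : V → Prop, [DecidablePred p] → (S.erase v).filter p ⊆ S := fun p _ =>
        (Finset.filter_subset _ _).trans (Finset.erase_subset _ _)
      rcases le_or_gt N₁ ((S.erase v).filter fun w => G.Adj v w).card with h | h
      · rcases h₁ V G _ h with ⟨t, hts, ht⟩ | ⟨t, hts, ht⟩
        · refine Or.inl ⟨insert v t, Finset.insert_subset hv (hts.trans (hsub _)),
            ht.insert fun w hw => (Finset.mem_filter.1 (hts hw)).2⟩
        · exact Or.inr ⟨t, hts.trans (hsub _), ht⟩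
      · rcases h₂ V G ((S.erase v).filter fun w => ¬ G.Adj v w) (by omega) with
          ⟨t, hts, ht⟩ | ⟨t, hts, ht⟩
        · exact Or.inl ⟨t, hts.trans (hsub _), ht⟩
        · refine Or.inr ⟨insert v t, Finset.insert_subset hv (hts.trans (hsub _)), ?_⟩
          rw [← isNClique_compl] at ht ⊢
          refine ht.insert fun w hw => ?_
          have := Finset.mem_filter.1 (hts hw)
          rw [compl_adj]
          exact ⟨(Finset.ne_of_mem_erase this.1).symm, this.2⟩

/-- Any two vertices of `A` are joined by a walk of `T` staying inside `A`. -/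
def SimpleGraph.WalkConnected {ι : Type*} (T : SimpleGraph ι) (A : Set ι) : Prop :=
  ∀ a ∈ A, ∀ b ∈ A, ∃ p : T.Walk a b, ∀ c ∈ p.support, c ∈ A

theorem SimpleGraph.WalkConnected.of_induce_connected {ι : Type*} {T : SimpleGraph ι} {A : Set ι}
    (h : (T.induce A).Connected) : T.WalkConnected A := by
  intro a ha b hb
  obtain ⟨p⟩ := h.preconnected ⟨a, ha⟩ ⟨b, hb⟩
  refine ⟨p.map (Embedding.induce A).toHom, fun c hc => ?_⟩
  obtain ⟨d, -, rfl⟩ := List.mem_map.1 (p.support_map _ ▸ hc)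
  exact d.2

theorem SimpleGraph.Walk.dist_lt_of_mem_support {ι : Type*} {T : SimpleGraph ι} {r x c : ι}
    {q : T.Walk r x} (hq : q.length = T.dist r x) (hc : c ∈ q.support) (hne : c ≠ x) :
    T.dist r c < T.dist r x := by
  classical
  have h₁ := q.length_takeUntil_lt_length hc hne
  have h₂ := dist_le (q.takeUntil c hc)
  omega

/-- In a tree, the path from the root to a vertex `y` of a connected set `A` runs through the
vertex of `A` nearest to the root, and stays in `A` from there on. -/
theorem SimpleGraph.exists_isPath_through_nearest {ι : Type*} {T : SimpleGraph ι}
    (hT : T.Connected) {r x y : ι} {A : Set ι} (hA : T.WalkConnected A) (hx : x ∈ A) (hy : y ∈ A)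
    (hmin : ∀ a ∈ A, T.dist r x ≤ T.dist r a) :
    ∃ P : T.Walk r y, P.IsPath ∧ x ∈ P.support ∧
      ∀ c ∈ P.support, c ∈ A ∨ T.dist r c < T.dist r x := by
  classical
  obtain ⟨q, hq, hql⟩ := hT.exists_path_of_dist r x
  obtain ⟨p, hp⟩ := hA x hx y hy
  have hpA : ∀ c ∈ p.bypass.support, c ∈ A := fun c hc => hp c (p.support_bypass_subset_support hc)
  have hqA : ∀ c ∈ q.support, c = x ∨ T.dist r c < T.dist r x := fun c hc =>
    or_iff_not_imp_left.2 fun hne => Walk.dist_lt_of_mem_support hql hc hne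
  have hpath : p.bypass.IsPath := p.bypass_isPath
  refine ⟨q.append p.bypass, ?_, by simp, fun c hc => ?_⟩
  · rw [Walk.isPath_def, Walk.support_append, List.nodup_append]
    have hnd := hpath.support_nodup
    rw [← Walk.cons_tail_support, List.nodup_cons] at hnd
    refine ⟨hq.support_nodup, hnd.2, fun c hc d hd hcd => ?_⟩
    subst hcd
    rcases hqA c hc with rfl | hlt
    · exact hnd.1 hd
    · exact absurd (hmin c (hpA c (List.mem_of_mem_tail hd))) (by omega)
  · rcases (Walk.mem_support_append_iff _ _).1 hc with hc | hc
    · rcases hqA c hc with rfl | hlt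
      · exact Or.inl hx
      · exact Or.inr hlt
    · exact Or.inl (hpA c hc)

/-- If two connected sets of a rooted tree meet, the one whose nearest point to the root is closer
contains the nearest point of the other. -/
theorem SimpleGraph.IsTree.nearest_mem_of_inter_nonempty {ι : Type*} {T : SimpleGraph ι}
    (hT : T.IsTree) {r x x' : ι} {A A' : Set ι} (hA : T.WalkConnected A)
    (hA' : T.WalkConnected A') (hx : x ∈ A) (hx' : x' ∈ A')
    (hmin : ∀ a ∈ A, T.dist r x ≤ T.dist r a) (hmin' : ∀ a ∈ A', T.dist r x' ≤ T.dist r a)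
    (hle : T.dist r x' ≤ T.dist r x) (hne : (A ∩ A').Nonempty) : x ∈ A' := by
  obtain ⟨y, hy, hy'⟩ := hne
  obtain ⟨P, hP, hxP, -⟩ := exists_isPath_through_nearest hT.connected hA hx hy hmin
  obtain ⟨P', hP', -, h⟩ := exists_isPath_through_nearest hT.connected hA' hx' hy' hmin'
  obtain rfl := (hT.existsUnique_path r y).unique hP hP'
  rcases h x hxP with h | h
  · exact h
  · omega

namespace TreeDecomp

variable {V : Type*} {G : SimpleGraph V}

/-- The nodes whose bags meet `K`. -/
def nodes (D : TreeDecomp G) (K : Finset V) : Set D.ι :=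
  {i | ∃ v ∈ K, v ∈ D.bag i}

theorem nodes_walkConnected (D : TreeDecomp G) {K : Finset V} (hK : G.IsClique (K : Set V)) :
    D.T.WalkConnected (D.nodes K) := by
  rintro i ⟨u, hu, hui⟩ j ⟨v, hv, hvj⟩
  obtain ⟨k, huk, hvk⟩ : ∃ k, u ∈ D.bag k ∧ v ∈ D.bag k := by
    by_cases h : u = v
    · subst h; exact ⟨i, hui, hui⟩
    · exact D.bag_edge u v (hK hu hv h)
  obtain ⟨p, hp⟩ := WalkConnected.of_induce_connected (D.bag_conn u) i hui k huk
  obtain ⟨q, hq⟩ := WalkConnected.of_induce_connected (D.bag_conn v) k hvk j hvj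
  refine ⟨p.append q, fun c hc => ?_⟩
  rcases (Walk.mem_support_append_iff _ _).1 hc with hc | hc
  · exact ⟨u, hu, hp c hc⟩
  · exact ⟨v, hv, hq c hc⟩

theorem exists_nearest (D : TreeDecomp G) (r : D.ι) {K : Finset V} (hK : K.Nonempty) :
    ∃ x ∈ D.nodes K, ∀ a ∈ D.nodes K, D.T.dist r x ≤ D.T.dist r a := by
  obtain ⟨v, hv⟩ := hK
  obtain ⟨i, hi⟩ := D.bag_vert v
  obtain ⟨x, hx, hmin⟩ := exists_minimalFor_of_wellFoundedLT (· ∈ D.nodes K) (D.T.dist r)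
    ⟨i, v, hv, hi⟩
  exact ⟨x, hx, fun a ha => (le_total _ _).elim id fun h => hmin ha h⟩

/-- Erdős–Pósa property for cliques in a graph of bounded treewidth: a family of nonempty cliques
contains `n` pairwise disjoint and anticomplete members, or has a hitting set of bounded size. -/
theorem exists_anticomplete_or_hitting [Finite V] (D : TreeDecomp G) {w : ℕ}
    (hw : ∀ i, (D.bag i).ncard ≤ w) (n : ℕ) (F : Set (Finset V))
    (hF : ∀ K ∈ F, K.Nonempty ∧ G.IsClique (K : Set V)) :
    (∃ K : Fin n → Finset V, (∀ i, K i ∈ F) ∧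
      ∀ i j, i ≠ j → ∀ u ∈ K i, ∀ v ∈ K j, u ≠ v ∧ ¬ G.Adj u v) ∨
    ∃ S : Set V, S.ncard ≤ n * w ∧ ∀ K ∈ F, ∃ v ∈ K, v ∈ S := by
  induction n generalizing F with
  | zero => exact Or.inl ⟨Fin.elim0, fun i => i.elim0, fun i => i.elim0⟩
  | succ n ih =>
    rcases F.eq_empty_or_nonempty with rfl | hne
    · exact Or.inr ⟨∅, by simp, by simp⟩
    obtain ⟨r⟩ := D.tree.connected.nonempty
    have : Nonempty D.ι := ⟨r⟩
    choose! top htop hmin using fun K (hK : K ∈ F) => D.exists_nearest r (hF K hK).1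
    obtain ⟨K₀, hK₀, hmax⟩ := F.toFinite.exists_maximalFor (fun K => D.T.dist r (top K)) F hne
    have hmax' : ∀ K ∈ F, D.T.dist r (top K) ≤ D.T.dist r (top K₀) := fun K hK =>
      (le_total _ _).elim id fun h => hmax hK h
    rcases ih {K ∈ F | top K₀ ∉ D.nodes K} (fun K hK => hF K hK.1) with
      ⟨K, hK, hanti⟩ | ⟨S, hS, hhit⟩
    · have hsep : ∀ i, ∀ u ∈ K₀, ∀ v ∈ K i, u ≠ v ∧ ¬ G.Adj u v := by
        intro i u hu v hv
        have hdisj : ¬ (D.nodes K₀ ∩ D.nodes (K i)).Nonempty := fun h =>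
          (hK i).2 (D.tree.nearest_mem_of_inter_nonempty (D.nodes_walkConnected (hF _ hK₀).2)
            (D.nodes_walkConnected (hF _ (hK i).1).2) (htop _ hK₀) (htop _ (hK i).1)
            (hmin _ hK₀) (hmin _ (hK i).1) (hmax' _ (hK i).1) h)
        constructor
        · rintro rfl
          obtain ⟨k, hk⟩ := D.bag_vert u
          exact hdisj ⟨k, ⟨u, hu, hk⟩, ⟨u, hv, hk⟩⟩
        · intro hadj
          obtain ⟨k, huk, hvk⟩ := D.bag_edge u v hadj
          exact hdisj ⟨k, ⟨u, hu, huk⟩, ⟨v, hv, hvk⟩⟩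
      refine Or.inl ⟨Fin.cons K₀ K, fun i => ?_, fun i j hij => ?_⟩
      · refine Fin.cases ?_ (fun i => ?_) i
        · exact hK₀
        · exact (hK i).1
      · induction i using Fin.cases with
        | zero =>
          induction j using Fin.cases with
          | zero => exact absurd rfl hij
          | succ j => simpa using hsep j
        | succ i =>
          induction j using Fin.cases with
          | zero =>
            simpa using fun u hu v hv =>
              ⟨(hsep i v hv u hu).1.symm, fun h => (hsep i v hv u hu).2 h.symm⟩
          | succ j => simpa using hanti i j (fun h => hij (by rw [h]))
    · refine Or.inr ⟨S ∪ D.bag (top K₀), ?_, fun K hK => ?_⟩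
      · have := Set.ncard_union_le S (D.bag (top K₀))
        have := hw (top K₀)
        rw [Nat.succ_mul]
        omega
      · by_cases h : top K₀ ∈ D.nodes K
        · obtain ⟨v, hv, hvb⟩ := h
          exact ⟨v, hv, Or.inr hvb⟩
        · obtain ⟨v, hv, hvS⟩ := hhit K ⟨hK, h⟩
          exact ⟨v, hv, Or.inl hvS⟩

/-- The tree decomposition with a single bag. -/
def trivial (G : SimpleGraph V) : TreeDecomp G where
  ι := Unit
  T := ⊥
  tree := IsTree.of_subsingleton
  bag _ := Set.univ
  bag_vert _ := ⟨(), Set.mem_univ _⟩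
  bag_edge _ _ _ := ⟨(), Set.mem_univ _, Set.mem_univ _⟩
  bag_conn _ := (induceUnivIso _).connected_iff.2 IsTree.of_subsingleton.connected

/-- Adding the vertices outside `H` to every bag of a tree decomposition of `G[H]`. -/
def extend {H : Set V} (D : TreeDecomp (G.induce H)) : TreeDecomp G where
  ι := D.ι
  T := D.T
  tree := D.tree
  bag i := {v | ∀ h : v ∈ H, (⟨v, h⟩ : H) ∈ D.bag i}
  bag_vert v := by
    by_cases h : v ∈ H
    · obtain ⟨i, hi⟩ := D.bag_vert ⟨v, h⟩
      exact ⟨i, fun _ => hi⟩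
    · obtain ⟨i⟩ := D.tree.connected.nonempty
      exact ⟨i, fun h' => absurd h' h⟩
  bag_edge u v huv := by
    by_cases hu : u ∈ H
    · by_cases hv : v ∈ H
      · obtain ⟨i, hi, hj⟩ := D.bag_edge ⟨u, hu⟩ ⟨v, hv⟩ huv
        exact ⟨i, fun _ => hi, fun _ => hj⟩
      · obtain ⟨i, hi⟩ := D.bag_vert ⟨u, hu⟩
        exact ⟨i, fun _ => hi, fun h' => absurd h' hv⟩
    · by_cases hv : v ∈ H
      · obtain ⟨i, hi⟩ := D.bag_vert ⟨v, hv⟩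
        exact ⟨i, fun h' => absurd h' hu, fun _ => hi⟩
      · obtain ⟨i⟩ := D.tree.connected.nonempty
        exact ⟨i, fun h' => absurd h' hu, fun h' => absurd h' hv⟩
  bag_conn v := by
    by_cases h : v ∈ H
    · have : {i | v ∈ {v | ∀ h : v ∈ H, (⟨v, h⟩ : H) ∈ D.bag i}} = {i | ⟨v, h⟩ ∈ D.bag i} :=
        Set.ext fun i => ⟨fun hi => hi h, fun hi _ => hi⟩
      rw [this]
      exact D.bag_conn ⟨v, h⟩
    · have : {i | v ∈ {v | ∀ h : v ∈ H, (⟨v, h⟩ : H) ∈ D.bag i}} = Set.univ := by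
        ext i; simp [h]
      rw [this]
      exact (induceUnivIso D.T).connected_iff.2 D.tree.connected

end TreeDecomp

theorem card_le_setIndepNum {V : Type*} [Finite V] {G : SimpleGraph V} {s : Set V} {t : Finset V}
    (hts : ↑t ⊆ s) (ht : ∀ u ∈ t, ∀ v ∈ t, u ≠ v → ¬ G.Adj u v) : t.card ≤ setIndepNum G s := by
  cases nonempty_fintype V
  refine le_csSup ⟨Fintype.card V, ?_⟩ ⟨t, hts, ht, rfl⟩
  rintro n ⟨t, -, -, rfl⟩
  exact t.card_le_univ

theorem exists_treeDecomp_ncard_le {V : Type*} (G : SimpleGraph V) :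
    ∃ D : TreeDecomp G, ∀ i, (D.bag i).ncard ≤ treewidth G + 1 :=
  Nat.sInf_mem (s := {n | ∃ D : TreeDecomp G, ∀ i, (D.bag i).ncard ≤ n + 1})
    ⟨(Set.univ : Set V).ncard, TreeDecomp.trivial G, fun _ => Nat.le_succ _⟩

theorem exists_treeDecomp_setIndepNum_le {V : Type*} (G : SimpleGraph V) :
    ∃ D : TreeDecomp G, ∀ i, setIndepNum G (D.bag i) ≤ treeIndepNum G :=
  Nat.sInf_mem (s := {n | ∃ D : TreeDecomp G, ∀ i, setIndepNum G (D.bag i) ≤ n})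
    ⟨setIndepNum G Set.univ, TreeDecomp.trivial G, fun _ => le_rfl⟩

/-- A clique partition graph embeds in every graph with enough large, pairwise anticomplete
cliques. -/
theorem IsCliquePartitionGraph.nonempty_embedding {U V : Type*} [Finite U] {B : SimpleGraph U}
    {G : SimpleGraph V} (hB : IsCliquePartitionGraph B) {m : ℕ} (hm : Nat.card U ≤ m)
    (K : Fin m → Finset V) (hK : ∀ i, G.IsNClique m (K i))
    (hanti : ∀ i j, i ≠ j → ∀ u ∈ K i, ∀ v ∈ K j, u ≠ v ∧ ¬ G.Adj u v) :
    Nonempty (B ↪g G) := by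
  obtain ⟨ι, f, hf⟩ := hB
  let e : U → Fin m := fun u => Fin.castLE hm (Finite.equivFin U u)
  have he : Function.Injective e :=
    (Fin.castLE_injective hm).comp (Finite.equivFin U).injective
  choose g hg using fun i : Set.range f => i.2
  let part : U → Fin m := fun u => e (g ⟨f u, u, rfl⟩)
  have hpart : ∀ u v, part u = part v ↔ f u = f v := by
    intro u v
    constructor
    · intro h
      have := congrArg f (he h)
      rwa [hg, hg] at this
    · intro h
      simp only [part, h]
  let φ : U → V := fun u => ((K (part u)).equivFinOfCardEq (hK _).card_eq).symm (e u)
  have hφ : ∀ u, φ u ∈ K (part u) := fun u => Subtype.prop _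
  have hinj : ∀ u v, part u = part v → φ u = φ v → u = v := by
    intro u v hp h
    have key : ∀ i j, i = j → ∀ a b : Fin m,
        (((K i).equivFinOfCardEq (hK i).card_eq).symm a : V) =
          ((K j).equivFinOfCardEq (hK j).card_eq).symm b → a = b := by
      rintro i _ rfl a b h
      exact (Equiv.injective _) (Subtype.ext h)
    exact he (key _ _ hp _ _ h)
  have hφinj : Function.Injective φ := by
    intro u v h
    by_cases hp : part u = part v
    · exact hinj u v hp h
    · exact absurd h (hanti _ _ hp _ (hφ u) _ (hφ v)).1
  refine ⟨⟨⟨φ, hφinj⟩, fun {u v} => ?_⟩⟩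
  change G.Adj (φ u) (φ v) ↔ B.Adj u v
  by_cases huv : u = v
  · subst huv; simp
  rw [hf u v huv, ← hpart]
  constructor
  · intro h
    by_contra hp
    exact (hanti _ _ hp _ (hφ u) _ (hφ v)).2 h
  · intro hp
    exact (hK (part u)).isClique (hφ u) (hp ▸ hφ v) (hφinj.ne huv)

/-- Let `H` be a largest vertex set of `G` without cliques of size `m + 1`. If `S` meets
every `m`-clique in `H`, independent sets outside `H` have at most `|S|` elements. -/
theorem SimpleGraph.card_le_of_hitting {V : Type*} [Finite V] {G : SimpleGraph V} {m : ℕ}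
    {H S : Set V} (hmax : ∀ H' : Set V, G.CliqueFreeOn H' (m + 1) → H'.ncard ≤ H.ncard)
    (hS : ∀ K : Finset V, ↑K ⊆ H → G.IsNClique m K → ∃ v ∈ K, v ∈ S)
    {I : Finset V} (hI : G.IsIndepSet (I : Set V)) (hIH : ∀ v ∈ I, v ∉ H) :
    I.card ≤ S.ncard := by
  classical
  have hfree : G.CliqueFreeOn ((H \ S) ∪ I) (m + 1) := by
    intro K hK hKc
    obtain ⟨a, ha⟩ : ∃ a ∈ K, ∀ v ∈ K, v ∈ I → v = a := by
      by_cases h : ∃ a ∈ K, a ∈ I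
      · obtain ⟨a, haK, haI⟩ := h
        refine ⟨a, haK, fun v hv hvI => ?_⟩
        by_contra hne
        exact hI hvI haI hne (hKc.isClique hv haK hne)
      · push Not at h
        obtain ⟨a, ha⟩ : K.Nonempty := Finset.card_pos.1 (by rw [hKc.card_eq]; omega)
        exact ⟨a, ha, fun v hv hvI => absurd hvI (h v hv)⟩
    have hsub : ∀ v ∈ K.erase a, v ∈ H \ S := fun v hv =>
      (hK (Finset.mem_of_mem_erase hv)).resolve_right fun hvI =>
        Finset.ne_of_mem_erase hv (ha.2 v (Finset.mem_of_mem_erase hv) hvI)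
    obtain ⟨v, hv, hvS⟩ := hS (K.erase a) (fun v hv => (hsub v hv).1)
      (hKc.erase_of_mem ha.1)
    exact (hsub v hv).2 hvS
  have h₁ := hmax _ hfree
  rw [Set.ncard_union_eq (Set.disjoint_left.2 fun v hv hvI => hIH v hvI hv.1),
    Set.ncard_coe_finset] at h₁
  have h₂ := Set.le_ncard_sdiff S H
  omega

theorem BddTreeIndep.twOmegaBounded {C : Set FinGraph} (hered : Hereditary C)
    (h : BddTreeIndep C) : TwOmegaBounded C := by
  obtain ⟨c, hc⟩ := h
  choose R hR using fun k => exists_ramsey (k + 1) (c + 1)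
  refine ⟨R, fun A hA s => ?_⟩
  have := A.finite
  have hα := hc _ (hered A hA ⟨s, inferInstance, A.G.induce s⟩ ⟨Embedding.induce s⟩)
  obtain ⟨D, hD⟩ := exists_treeDecomp_setIndepNum_le (A.G.induce s)
  refine Nat.sInf_le ⟨D, fun i => ?_⟩
  by_contra! hlt
  have hcard := Set.ncard_eq_toFinset_card (D.bag i)
  rcases hR (A.G.induce s).cliqueNum s (A.G.induce s) (D.bag i).toFinite.toFinset (by omega) with
    ⟨t, hts, ht⟩ | ⟨t, hts, ht⟩
  · have := ht.isClique.card_le_cliqueNum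
    rw [ht.card_eq] at this
    omega
  · have h₁ := card_le_setIndepNum (G := A.G.induce s) (s := D.bag i) (t := t)
      (fun v hv => (Set.Finite.mem_toFinset _).1 (hts hv))
      (fun u hu v hv huv => ht.isIndepSet hu hv huv)
    rw [ht.card_eq] at h₁
    have h₂ := hD i
    simp only at hα
    omega

theorem TwOmegaBounded.bddTreeIndep {C : Set FinGraph} (hered : Hereditary C)
    {B : FinGraph} (hB : IsCliquePartitionGraph B.G) (hBC : B ∉ C) (h : TwOmegaBounded C) :
    BddTreeIndep C := by
  obtain ⟨f, hf⟩ := h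
  have := B.finite
  obtain ⟨m, hm⟩ : ∃ m, m = Nat.card B.V + 1 := ⟨_, rfl⟩
  obtain ⟨w, hw⟩ : ∃ w, w = (Finset.range (m + 1)).sup f + 1 := ⟨_, rfl⟩
  refine ⟨w + m * w, fun A hA => ?_⟩
  have := A.finite
  obtain ⟨H, hHfree, hHmax⟩ :=
    (Set.toFinite {H : Set A.V | A.G.CliqueFreeOn H (m + 1)}).exists_maximalFor
      Set.ncard _ ⟨∅, by simp⟩
  have hmax : ∀ H' : Set A.V, A.G.CliqueFreeOn H' (m + 1) → H'.ncard ≤ H.ncard := fun H' hH' =>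
    (le_total _ _).elim id fun h => hHmax hH' h
  have hω : (A.G.induce H).cliqueNum < m + 1 := by
    by_contra! hle
    obtain ⟨K, hK⟩ := (A.G.induce H).exists_isNClique_cliqueNum
    exact ((cliqueFree_induce_iff _ _ _).2 hHfree).mono hle K hK
  obtain ⟨D, hD⟩ := exists_treeDecomp_ncard_le (A.G.induce H)
  have hDw : ∀ i, (D.bag i).ncard ≤ w := fun i => by
    have h₁ := hf A hA H
    have h₂ := Finset.le_sup (f := f) (Finset.mem_range.2 hω)
    have h₃ := hD i
    omega
  rcases D.exists_anticomplete_or_hitting hDw m {K | (A.G.induce H).IsNClique m K}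
    (fun K hK => ⟨Finset.card_pos.1 (by rw [hK.card_eq]; omega), hK.isClique⟩) with
    ⟨K, hK, hanti⟩ | ⟨S, hScard, hS⟩
  · obtain ⟨φ⟩ := hB.nonempty_embedding (by omega) K hK hanti
    exact absurd (hered A hA B ⟨(Embedding.induce H).comp φ⟩) hBC
  · refine Nat.sInf_le ⟨D.extend, fun i => csSup_le' ?_⟩
    rintro _ ⟨I, hIbag, hI, rfl⟩
    classical
    have hout : (I.filter (· ∉ H)).card ≤ (Subtype.val '' S).ncard := by
      refine card_le_of_hitting hmax (fun K hKH hK => ?_) (fun u hu v hv huv => ?_)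
        (fun v hv => (Finset.mem_filter.1 hv).2)
      · lift K to Finset H using hKH
        obtain ⟨v, hv, hvS⟩ := hS K ((isNClique_induce_iff H K m).2 (by
          rwa [Finset.map_eq_image]))
        exact ⟨v, Finset.mem_image_of_mem _ hv, v, hvS, rfl⟩
      · exact hI u (Finset.mem_filter.1 hu).1 v (Finset.mem_filter.1 hv).1 huv
    have hin : (I.filter (· ∈ H)).card ≤ (Subtype.val '' D.bag i).ncard := by
      rw [← Set.ncard_coe_finset]
      refine Set.ncard_le_ncard fun v hv => ?_
      obtain ⟨hvI, hvH⟩ := Finset.mem_filter.1 hv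
      exact ⟨⟨v, hvH⟩, hIbag hvI hvH, rfl⟩
    rw [Set.ncard_image_of_injective _ Subtype.val_injective] at hin hout
    have hsum := Finset.card_filter_add_card_filter_not (s := I) (· ∈ H)
    have := hDw i
    omega

/-- Let `𝒢` be a hereditary graph class that does not contain all clique
partition graphs. Then `𝒢` is `(tw, ω)`-bounded iff `𝒢` has bounded tree-independence number. -/
theorem stmt_0 (𝒢 : Set FinGraph) (hered : Hereditary 𝒢)
    (hmiss : ∃ B : FinGraph, IsCliquePartitionGraph B.G ∧ B ∉ 𝒢) :
    TwOmegaBounded 𝒢 ↔ BddTreeIndep 𝒢 := by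
  obtain ⟨B, hB, hBC⟩ := hmiss
  exact ⟨fun h => h.bddTreeIndep hered hB hBC, fun h => h.twOmegaBounded hered⟩
end

section
/- For every positive integer s, every 2K_{1,s}-subgraph-free graph has at most one vertex of degree greater than 2s; equivalently, if G is 2K_{1,s}-subgraph-free and v is a vertex of G with degree at least 2s+1, then every vertex w ≠ v of G has degree at most s. -/
open SimpleGraph

/-- `G` is `H`-subgraph-free: no subgraph of `G` is isomorphic to `H`,
i.e. there is no injective graph homomorphism from `H` to `G`. -/
def SubgraphFree {W V : Type*} (H : SimpleGraph W) (G : SimpleGraph V) : Prop :=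
  ¬ ∃ f : H →g G, Function.Injective f

/-- The star `K_{1,s}`. -/
def starGraph (s : ℕ) : SimpleGraph (Fin 1 ⊕ Fin s) := completeBipartiteGraph (Fin 1) (Fin s)

/-- `2K_{1,s}`: the disjoint union of two copies of the star `K_{1,s}`. -/
def twoStars (s : ℕ) : SimpleGraph ((Fin 1 ⊕ Fin s) ⊕ (Fin 1 ⊕ Fin s)) :=
  starGraph s ⊕g starGraph s

/-- Two vertices `v`, `w` together with disjoint sets `A` and `B` of `s` neighbours of `w` and `v`
respectively, avoiding both centres, span a copy of `2K_{1,s}`. -/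
lemma not_subgraphFree_twoStars {V : Type*} {G : SimpleGraph V} {s : ℕ} {v w : V} (hne : w ≠ v)
    {A B : Finset V} (hA : A.card = s) (hB : B.card = s) (hAB : Disjoint A B)
    (hwA : ∀ a ∈ A, G.Adj w a) (hvB : ∀ b ∈ B, G.Adj v b) (hvA : v ∉ A) (hwB : w ∉ B) :
    ¬ SubgraphFree (twoStars s) G := by
  let a : Fin s ≃ A := (A.equivFinOfCardEq hA).symm
  let b : Fin s ≃ B := (B.equivFinOfCardEq hB).symm
  let fA : Fin 1 ⊕ Fin s → V := Sum.elim (fun _ => w) (fun i => a i)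
  let fB : Fin 1 ⊕ Fin s → V := Sum.elim (fun _ => v) (fun i => b i)
  have hfA : Function.Injective fA := by
    refine Function.Injective.sumElim (Function.injective_of_subsingleton _)
      (Subtype.val_injective.comp a.injective) fun _ i => ?_
    exact (hwA _ (a i).2).ne
  have hfB : Function.Injective fB := by
    refine Function.Injective.sumElim (Function.injective_of_subsingleton _)
      (Subtype.val_injective.comp b.injective) fun _ i => ?_
    exact (hvB _ (b i).2).ne
  have hdisj : ∀ x y, fA x ≠ fB y := by
    rintro (x | x) (y | y) h
    · exact hne h
    · exact hwB ((show w = b y from h) ▸ (b y).2)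
    · exact hvA ((show (a x : V) = v from h) ▸ (a x).2)
    · exact Finset.disjoint_left.mp hAB (a x).2 ((show (a x : V) = b y from h) ▸ (b y).2)
  refine not_not.mpr ⟨⟨Sum.elim fA fB, ?_⟩, hfA.sumElim hfB hdisj⟩
  rintro ((x | x) | (x | x)) ((y | y) | (y | y)) h <;>
    simp [twoStars, _root_.starGraph] at h
  · exact hwA _ (a y).2
  · exact (hwA _ (a x).2).symm
  · exact hvB _ (b y).2
  · exact (hvB _ (b x).2).symm

/-- For every positive integer `s`, if `G` is a `2K_{1,s}`-subgraph-free
graph and `v` is a vertex of degree at least `2s + 1`, then every vertex `w ≠ v` has degree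
at most `s` (so `G` has at most one vertex of degree greater than `2s`). -/
theorem stmt_3 (s : ℕ) (hs : 0 < s) {V : Type} [Fintype V] (G : SimpleGraph V)
    [DecidableRel G.Adj] (hfree : SubgraphFree (twoStars s) G)
    (v : V) (hv : 2 * s + 1 ≤ G.degree v) :
    ∀ w : V, w ≠ v → G.degree w ≤ s := by
  classical
  intro w hne
  by_contra! hw
  obtain ⟨A, hAsub, hA⟩ : ∃ A ⊆ (G.neighborFinset w).erase v, A.card = s := by
    refine Finset.exists_subset_card_eq ?_
    have := Finset.pred_card_le_card_erase (s := G.neighborFinset w) (a := v)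
    rw [G.card_neighborFinset_eq_degree] at this
    omega
  obtain ⟨B, hBsub, hB⟩ : ∃ B ⊆ G.neighborFinset v \ insert w A, B.card = s := by
    refine Finset.exists_subset_card_eq ?_
    have hdiff := Finset.le_card_sdiff (insert w A) (G.neighborFinset v)
    have hinsert := Finset.card_insert_le w A
    rw [G.card_neighborFinset_eq_degree] at hdiff
    omega
  refine not_subgraphFree_twoStars hne hA hB (Finset.disjoint_left.mpr fun x hxA hxB => ?_)
    (fun a ha => ?_) (fun b hb => ?_) (fun h => ?_) (fun h => ?_) hfree
  · have := hBsub hxB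
    simp [hxA] at this
  · have := hAsub ha
    simp_all
  · have := hBsub hb
    simp_all
  · simpa using hAsub h
  · simpa using hBsub h
end

section
/- For every graph G, the complement of the line graph of G does not contain two independent cycles, that is, it has no two vertex-disjoint cycles with no edge between them (it is 𝒪_2-free). -/
open SimpleGraph

/-- `G` contains `k` pairwise independent cycles: `k` cycles that are pairwise
vertex-disjoint with no edge between any two of them. -/
def HasIndepCycles {V : Type*} (G : SimpleGraph V) (k : ℕ) : Prop :=
  ∃ (a : Fin k → V) (w : ∀ i : Fin k, G.Walk (a i) (a i)),
    (∀ i, (w i).IsCycle) ∧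
    ∀ i j : Fin k, i ≠ j →
      ∀ u ∈ (w i).support, ∀ v ∈ (w j).support, u ≠ v ∧ ¬ G.Adj u v

/-- `G` is `𝒪_k`-free: it does not contain `k` pairwise independent cycles. -/
def OkFree {V : Type*} (G : SimpleGraph V) (k : ℕ) : Prop :=
  ¬ HasIndepCycles G k

/-- Two disjoint pairs `e`, `f` and a pair `y` meeting both determine the pair that meets `e` and `f`
but not `y`. -/
theorem Sym2.eq_of_meets_of_disjoint {V : Type*} {e f x y z : Sym2 V}
    (hef : ∀ v ∈ e, v ∉ f)
    (hye : ∃ v ∈ y, v ∈ e) (hyf : ∃ v ∈ y, v ∈ f)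
    (hxe : ∃ v ∈ x, v ∈ e) (hxf : ∃ v ∈ x, v ∈ f)
    (hze : ∃ v ∈ z, v ∈ e) (hzf : ∃ v ∈ z, v ∈ f)
    (hxy : ∀ v ∈ y, v ∉ x) (hzy : ∀ v ∈ y, v ∉ z) : x = z := by
  obtain ⟨p, hpy, hpe⟩ := hye
  obtain ⟨q, hqy, hqf⟩ := hyf
  obtain ⟨p', rfl⟩ := Sym2.mem_iff_exists.1 hpe
  obtain ⟨q', rfl⟩ := Sym2.mem_iff_exists.1 hqf
  have hne : p' ≠ q' := by
    rintro rfl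
    exact hef p' (Sym2.mem_mk_right _ _) (Sym2.mem_mk_right _ _)
  have key : ∀ t : Sym2 V, (∃ v ∈ t, v ∈ s(p, p')) → (∃ v ∈ t, v ∈ s(q, q')) →
      (∀ v ∈ y, v ∉ t) → t = s(p', q') := by
    rintro t ⟨a, hat, ha⟩ ⟨b, hbt, hb⟩ hty
    rw [← Sym2.mem_and_mem_iff hne]
    rcases Sym2.mem_iff.1 ha with rfl | rfl
    · exact absurd hat (hty _ hpy)
    rcases Sym2.mem_iff.1 hb with rfl | rfl
    · exact absurd hbt (hty _ hqy)
    exact ⟨hat, hbt⟩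
  rw [key x hxe hxf hxy, key z hze hzf hzy]

/-- Distinct edges are adjacent in the complement of the line graph iff they share no endpoint. -/
theorem SimpleGraph.compl_lineGraph_adj_iff {V : Type*} {G : SimpleGraph V} {e f : G.edgeSet}
    (hef : e ≠ f) : G.lineGraphᶜ.Adj e f ↔ ∀ v ∈ (e : Sym2 V), v ∉ (f : Sym2 V) := by
  simp [SimpleGraph.compl_adj, SimpleGraph.lineGraph_adj_iff_exists, hef]

/-- For every graph `G`, the complement of the line graph of `G` does not
contain two independent cycles (it is `𝒪_2`-free). -/
theorem stmt_8 {V : Type} [Finite V] (G : SimpleGraph V) :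
    OkFree (G.lineGraph)ᶜ 2 := by
  rintro ⟨a, w, hw, hind⟩
  have hmeet : ∀ e ∈ (w 1).support, ∀ f ∈ (w 0).support,
      ∃ v ∈ (e : Sym2 V), v ∈ (f : Sym2 V) := by
    intro e he f hf
    obtain ⟨hne, hadj⟩ := hind 1 0 (by decide) e he f hf
    rw [compl_lineGraph_adj_iff hne] at hadj
    push Not at hadj
    exact hadj
  have h0 := (w 0).adj_snd (hw 0).not_nil
  have h1 := (w 1).adj_snd (hw 1).not_nil
  have h2 := ((w 1).adj_penultimate (hw 1).not_nil).symm
  have e0 := (w 0).start_mem_support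
  have e1 := (w 0).getVert_mem_support 1
  have y0 := (w 1).start_mem_support
  have x0 := (w 1).getVert_mem_support 1
  have z0 := (w 1).getVert_mem_support ((w 1).length - 1)
  exact (hw 1).snd_ne_penultimate <| Subtype.ext <| Sym2.eq_of_meets_of_disjoint
    ((compl_lineGraph_adj_iff h0.ne).1 h0)
    (hmeet _ y0 _ e0) (hmeet _ y0 _ e1) (hmeet _ x0 _ e0) (hmeet _ x0 _ e1)
    (hmeet _ z0 _ e0) (hmeet _ z0 _ e1)
    ((compl_lineGraph_adj_iff h1.ne).1 h1) ((compl_lineGraph_adj_iff h2.ne).1 h2)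
end

section
/- Let G be a (P_3 + P_1)-free graph. Then tree-α(G) ≤ max{ibn(G), 2}. -/
open SimpleGraph
/-- `G` is `H`-free: no induced subgraph of `G` is isomorphic to `H`. -/
def IndFree {W V : Type*} (H : SimpleGraph W) (G : SimpleGraph V) : Prop :=
  IsEmpty (H ↪g G)

/-- The induced biclique number of `G`: the largest `s` such that `G` contains an induced
subgraph isomorphic to `K_{s,s}`. -/
noncomputable def ibn {V : Type*} (G : SimpleGraph V) : ℕ :=
  sSup {s | Nonempty (completeBipartiteGraph (Fin s) (Fin s) ↪g G)}

/-- `P_3 + P_1`: the disjoint union of a path on three vertices and an isolated vertex. -/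
def P3plusP1 : SimpleGraph (Fin 3 ⊕ Fin 1) := pathGraph 3 ⊕g (⊥ : SimpleGraph (Fin 1))

/-- In a `(P_3 + P_1)`-free graph every vertex has a neighbour on every induced `P_3`
that it avoids. -/
theorem IndFree.false_of_path {V : Type*} {G : SimpleGraph V} (hfree : IndFree P3plusP1 G)
    {a b c d : V} (hab : G.Adj a b) (hbc : G.Adj b c) (hac : ¬ G.Adj a c) (hne : a ≠ c)
    (hda : ¬ G.Adj d a) (hdb : ¬ G.Adj d b) (hdc : ¬ G.Adj d c) : False := by
  have hda' : d ≠ a := fun h => hdb (h ▸ hab)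
  have hdb' : d ≠ b := fun h => hda (h ▸ hab.symm)
  have hdc' : d ≠ c := fun h => hdb (h ▸ hbc.symm)
  refine hfree.false ⟨⟨Sum.elim ![a, b, c] ![d], ?_⟩, fun {x y} => ?_⟩
  · rintro (x | x) (y | y) h <;> fin_cases x <;> fin_cases y <;>
      simp_all [hab.ne, hab.ne', hbc.ne, hbc.ne', hne.symm, hda'.symm, hdb'.symm, hdc'.symm]
  · change G.Adj (Sum.elim ![a, b, c] ![d] x) (Sum.elim ![a, b, c] ![d] y) ↔ _
    rcases x with x | x <;> rcases y with y | y <;> fin_cases x <;> fin_cases y <;>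
      simp [P3plusP1, pathGraph_adj, hab, hab.symm, hbc, hbc.symm, hac, G.adj_comm c a,
        hda, hdb, hdc, G.adj_comm _ d]

/-- A family of bags in which every vertex lies in all bags or in exactly one bag yields a tree
decomposition, provided it covers all edges. -/
theorem TreeDecomp.exists_of_forall_or_unique {V : Type*} {G : SimpleGraph V} {ι : Type}
    [Nonempty ι] (bag : ι → Set V)
    (hvert : ∀ v, (∀ i, v ∈ bag i) ∨ ∃! i, v ∈ bag i)
    (hedge : ∀ u v, G.Adj u v → ∃ i, u ∈ bag i ∧ v ∈ bag i) :
    ∃ D : TreeDecomp G, ∀ j, ∃ i, D.bag j = bag i := by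
  obtain ⟨T, -, hT⟩ := (connected_top (V := ι)).exists_isTree_le
  refine ⟨⟨ι, T, hT, bag, fun v => ?_, hedge, fun v => ?_⟩, fun j => ⟨j, rfl⟩⟩
  · rcases hvert v with h | h
    · exact ⟨Classical.arbitrary ι, h _⟩
    · exact h.exists
  · rcases hvert v with h | ⟨i, hi, huniq⟩
    · rw [Set.eq_univ_of_forall (s := {i | v ∈ bag i}) h]
      exact (induceUnivIso T).connected_iff.mpr hT.connected
    · have hs : {i | v ∈ bag i} = {i} := Set.ext fun j => ⟨huniq j, fun h => h ▸ hi⟩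
      rw [hs]
      exact Connected.mk Preconnected.of_subsingleton

theorem treeIndepNum_le {V : Type*} {G : SimpleGraph V} {ι : Type} [Nonempty ι] {n : ℕ}
    (bag : ι → Set V)
    (hvert : ∀ v, (∀ i, v ∈ bag i) ∨ ∃! i, v ∈ bag i)
    (hedge : ∀ u v, G.Adj u v → ∃ i, u ∈ bag i ∧ v ∈ bag i)
    (hindep : ∀ i, ∀ t : Finset V, ↑t ⊆ bag i → G.IsIndepSet t → t.card ≤ n) :
    treeIndepNum G ≤ n := by
  obtain ⟨D, hD⟩ := TreeDecomp.exists_of_forall_or_unique bag hvert hedge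
  refine Nat.sInf_le ⟨D, fun j => ?_⟩
  obtain ⟨i, hi⟩ := hD j
  refine csSup_le' ?_
  rintro _ ⟨t, hts, ht, rfl⟩
  exact hindep i t (hi ▸ hts) fun u hu v hv huv => ht u hu v hv huv

/-- Two independent sets that are complete to each other bound `ibn` from below. -/
theorem card_le_ibn {V : Type*} [Finite V] {G : SimpleGraph V} {s t : Finset V}
    (hs : G.IsIndepSet s) (ht : G.IsIndepSet t) (hst : ∀ u ∈ s, ∀ v ∈ t, G.Adj u v)
    (hcard : s.card ≤ t.card) : s.card ≤ ibn G := by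
  have : Fintype V := Fintype.ofFinite V
  refine le_csSup ⟨Fintype.card V, ?_⟩ ?_
  · rintro n ⟨f⟩
    simpa using Fintype.card_le_of_injective (f ∘ Sum.inl) (f.injective.comp Sum.inl_injective)
  · let e : Fin s.card ↪ V := s.equivFin.symm.toEmbedding.trans (.subtype _)
    let f : Fin s.card ↪ V :=
      (Fin.castLEEmb hcard).trans (t.equivFin.symm.toEmbedding.trans (.subtype _))
    have he : ∀ i, e i ∈ s := fun i => (s.equivFin.symm i).2
    have hf : ∀ i, f i ∈ t := fun i => (t.equivFin.symm _).2
    have hss : ∀ u ∈ s, ∀ v ∈ s, ¬ G.Adj u v := fun u hu v hv h => hs hu hv h.ne h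
    have htt : ∀ u ∈ t, ∀ v ∈ t, ¬ G.Adj u v := fun u hu v hv h => ht hu hv h.ne h
    refine ⟨⟨⟨Sum.elim e f, ?_⟩, ?_⟩⟩
    · exact e.injective.sumElim f.injective fun i j => (hst _ (he i) _ (hf j)).ne
    · rintro (i | i) (j | j)
      · simpa using hss _ (he i) _ (he j)
      · simpa using hst _ (he i) _ (hf j)
      · simpa using (hst _ (he j) _ (hf i)).symm
      · simpa using htt _ (hf i) _ (hf j)

/-- Let `G` be a `(P_3 + P_1)`-free graph. Then
`tree-α(G) ≤ max {ibn(G), 2}`. -/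
theorem stmt_13 {V : Type} [Finite V] (G : SimpleGraph V) (hfree : IndFree P3plusP1 G) :
    treeIndepNum G ≤ max (ibn G) 2 := by
  classical
  have : Fintype V := Fintype.ofFinite V
  obtain ⟨I, hI⟩ := G.maximumIndepSet_exists
  have hmax : ∀ t : Finset V, G.IsIndepSet t → t.card ≤ I.card := fun t ht => hI.maximum t ht
  have hII : ∀ u ∈ I, ∀ v ∈ I, ¬ G.Adj u v := fun u hu v hv h => hI.isIndepSet hu hv h.ne h
  rcases le_or_gt I.card 2 with hcard | hcard
  · exact treeIndepNum_le (ι := Unit) (fun _ => Set.univ) (fun _ => .inl fun _ => trivial)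
      (fun _ _ _ => ⟨(), trivial, trivial⟩)
      fun _ t _ ht => ((hmax t ht).trans hcard).trans (le_max_right _ _)
  have third : ∀ i j, ∃ k ∈ I, k ≠ i ∧ k ≠ j := by
    intro i j
    obtain ⟨k, hk, hkn⟩ := Finset.exists_mem_notMem_of_card_lt_card
      (s := {i, j}) (t := I) (Finset.card_le_two.trans_lt hcard)
    exact ⟨k, hk, by simpa using hkn⟩
  -- every vertex outside `I` has a neighbour in `I`
  have dom : ∀ v, ∃ i ∈ I, v = i ∨ G.Adj v i := by
    intro v
    by_contra! h
    have hv : v ∉ I := fun hv => (h v hv).1 rfl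
    have := hmax (insert v I) (by
      rw [Finset.coe_insert]
      exact hI.isIndepSet.insert fun b hb _ => ⟨(h b hb).2, fun h' => (h b hb).2 h'.symm⟩)
    rw [Finset.card_insert_of_notMem hv] at this
    omega
  have full : ∀ v, ∀ i ∈ I, ∀ j ∈ I, i ≠ j → G.Adj v i → G.Adj v j → ∀ k ∈ I, G.Adj v k := by
    intro v i hi j hj hij hvi hvj k hk
    by_contra h
    exact hfree.false_of_path hvi.symm hvj (hII i hi j hj) hij (hII k hk i hi)
      (fun h' => h h'.symm) (hII k hk j hj)
  -- hence the closed neighbourhoods of `I` contain a vertex all together or exactly once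
  have dich : ∀ v, (∀ i ∈ I, G.Adj v i) ∨
      ∃ i ∈ I, (v = i ∨ G.Adj v i) ∧ ∀ j ∈ I, j ≠ i → v ≠ j ∧ ¬ G.Adj v j := by
    intro v
    obtain ⟨i, hi, hvi⟩ := dom v
    by_cases h : ∃ j ∈ I, j ≠ i ∧ (v = j ∨ G.Adj v j)
    · obtain ⟨j, hj, hji, hvj⟩ := h
      rcases hvi with rfl | hvi
      · rcases hvj with rfl | hvj
        · exact absurd rfl hji
        · exact absurd hvj (hII _ hi _ hj)
      · rcases hvj with rfl | hvj
        · exact absurd hvi (hII _ hj _ hi)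
        · exact .inl (full v i hi j hj hji.symm hvi hvj)
    · push Not at h
      exact .inr ⟨i, hi, hvi, h⟩
  obtain ⟨i₀, hi₀⟩ : I.Nonempty := Finset.card_pos.mp (by omega)
  have : Nonempty I := ⟨⟨i₀, hi₀⟩⟩
  refine treeIndepNum_le (ι := I) (fun i => {v | v = i ∨ G.Adj v i}) ?_ ?_ ?_
  · intro v
    rcases dich v with h | ⟨i, hi, hvi, h⟩
    · exact .inl fun i => .inr (h i i.2)
    · refine .inr ⟨⟨i, hi⟩, hvi, fun j hvj => ?_⟩
      by_contra hji
      have := h j j.2 fun h' => hji (Subtype.ext h')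
      exact hvj.elim this.1 this.2
  · intro u v huv
    rcases dich u with hu | ⟨i, hi, hui, hu⟩
    · obtain ⟨j, hj, hvj⟩ := dom v
      exact ⟨⟨j, hj⟩, .inr (hu j hj), hvj⟩
    refine ⟨⟨i, hi⟩, hui, ?_⟩
    rw [Set.mem_ofPred_eq]
    by_contra! hvi
    rcases hui with rfl | hui
    · exact hvi.2 huv.symm
    obtain ⟨j, hj, hvj⟩ := dom v
    obtain ⟨k, hk, hki, hkj⟩ := third i j
    rcases dich v with hv | ⟨l, hl, hvl, hv⟩
    · exact hvi.2 (hv i hi)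
    have hvk : ¬ G.Adj v k := by
      rcases eq_or_ne k l with rfl | hkl
      · have := hv j hj hkj.symm
        exact absurd hvj (by tauto)
      · exact (hv k hk hkl).2
    exact hfree.false_of_path hui.symm huv (fun h => hvi.2 h.symm) (fun h => hvi.1 h.symm)
      (hII k hk i hi) (fun h => (hu k hk hki).2 h.symm) fun h => hvk h.symm
  · rintro ⟨i, hi⟩ t hts ht
    by_cases hfull : ∀ v ∈ t, ∀ j ∈ I, G.Adj v j
    · exact (card_le_ibn ht hI.isIndepSet hfull (hmax t ht)).trans (le_max_left _ _)
    push Not at hfull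
    obtain ⟨a, ha, k, hk, hak⟩ := hfull
    have hai : a = i ∨ G.Adj a i := hts ha
    have hau : ∀ j ∈ I, j ≠ i → ¬ G.Adj a j := by
      intro j hj hji haj
      rcases hai with hai | hai
      · exact hII i hi j hj (hai ▸ haj)
      · exact hak (full a i hi j hj hji.symm hai haj k hk)
    -- a vertex with a single neighbour in `I` is adjacent to all other vertices of its bag
    have hsub : t ⊆ {a} := by
      intro b hb
      rw [Finset.mem_singleton]
      by_contra hba
      have hab : ¬ G.Adj a b := ht ha hb (Ne.symm hba)
      have hbi : G.Adj b i := by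
        rcases hts hb with h | h
        · rcases hai with h' | h'
          · exact absurd (h.trans h'.symm) hba
          · exact absurd (h ▸ h' : G.Adj a b) hab
        · exact h
      obtain ⟨j, hj, hji, -⟩ := third i i
      obtain ⟨l, hl, hli, hlj⟩ := third i j
      rcases hai with hai | hai
      · exact hab (hai ▸ hbi.symm)
      by_cases hbj : G.Adj b j
      · exact hfree.false_of_path hbj.symm (full b i hi j hj hji.symm hbi hbj l hl)
          (hII j hj l hl) hlj.symm (hau j hj hji) hab (hau l hl hli)
      · exact hfree.false_of_path hai hbi.symm hab (Ne.symm hba)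
          (fun h => hau j hj hji h.symm) (hII j hj i hi) fun h => hbj h.symm
    exact (Finset.card_le_card hsub).trans (by simp)
end
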